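/- Let k be a positive integer, let G be a finite simple graph, let P = (X_1,…,X_l) be a path decomposition of G in which every bag has size at most k, and let S ⊆ V(G) be a bottleneck, i.e., the number of S-branches is at least 2k+1. Then there exists an index i ∈ {1,…,l} with S ⊆ X_i. -/

import Mathlib

/-!
The bags meeting a connected set have consecutive indices. Let `b` be the least, over `s ∈ S`, of
the last index of a bag containing `s`, attained at `s₀`. If some `t ∈ S` is not in `X b`, then
every bag containing `t` comes after `b`, while every bag containing `s₀` comes at or before `b`.
Each `S`-branch is adjacent to both `s₀` and `t`, hence meets bags on both sides of `b`, hence meets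
`X b`. As the `S`-branches are pairwise disjoint, there are at most `|X b|` of them.
-/

open SimpleGraph

variable {V : Type*}

/-- `N_G(Y)`: the set of vertices outside `Y` having a neighbor in `Y`. -/
def nbhdSet (G : SimpleGraph V) (Y : Set V) : Set V :=
  {v | v ∉ Y ∧ ∃ u ∈ Y, G.Adj u v}

/-- `C` is a connected component of the subgraph of `G` induced by `U`. -/
def IsCompIn (G : SimpleGraph V) (U C : Set V) : Prop :=
  C.Nonempty ∧ C ⊆ U ∧ (G.induce C).Connected ∧
    ∀ u ∈ C, ∀ v ∈ U, G.Adj u v → v ∈ C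

/-- `C` is a connected component of `G - S`. -/
def IsCompOf (G : SimpleGraph V) (S C : Set V) : Prop :=
  IsCompIn G Sᶜ C

/-- `C` is an `S`-branch: a connected component of `G - S` with `N_G(C) = S`. -/
def IsBranch (G : SimpleGraph V) (S C : Set V) : Prop :=
  IsCompOf G S C ∧ nbhdSet G C = S

/-- `S` is a bottleneck (for the width parameter `k`): a nonempty set with
at least `2k+1` `S`-branches. -/
def IsBottleneck (G : SimpleGraph V) (k : ℕ) (S : Set V) : Prop :=
  S.Nonempty ∧ 2 * k + 1 ≤ {C : Set V | IsBranch G S C}.ncard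

/-- `(X 0, …, X (l-1))` is a path decomposition of `G`. -/
def IsPathDecomp (G : SimpleGraph V) (l : ℕ) (X : ℕ → Set V) : Prop :=
  (∀ v, ∃ i < l, v ∈ X i) ∧
  (∀ u v, G.Adj u v → ∃ i < l, u ∈ X i ∧ v ∈ X i) ∧
  (∀ i j m, i ≤ j → j ≤ m → m < l → X i ∩ X m ⊆ X j)

/-- The width of a path decomposition: the maximum bag size minus one. -/
noncomputable def pdWidth (l : ℕ) (X : ℕ → Set V) : ℕ :=
  ((Finset.range l).sup fun i => (X i).ncard) - 1

/-- The set of indices of bags meeting the vertex set `C`. -/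
def supp (l : ℕ) (X : ℕ → Set V) (C : Set V) : Set ℕ :=
  {t | t < l ∧ (C ∩ X t).Nonempty}

/-- `a(C)`: the first index of a bag meeting `C`. -/
noncomputable def firstIdx (l : ℕ) (X : ℕ → Set V) (C : Set V) : ℕ :=
  sInf (supp l X C)

/-- `b(C)`: the last index of a bag meeting `C`. -/
noncomputable def lastIdx (l : ℕ) (X : ℕ → Set V) (C : Set V) : ℕ :=
  sSup (supp l X C)

/-- `C` is an in-branch of `S` with respect to the decomposition:
an `S`-branch with `S ⊆ X (a C)` and `S ⊆ X (b C)`. -/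
def IsInBranch (G : SimpleGraph V) (l : ℕ) (X : ℕ → Set V) (S C : Set V) : Prop :=
  IsBranch G S C ∧ S ⊆ X (firstIdx l X C) ∧ S ⊆ X (lastIdx l X C)

/-- `α(S)`: the minimum of `a(H)` over in-branches `H` of `S`. -/
noncomputable def botStart (G : SimpleGraph V) (l : ℕ) (X : ℕ → Set V) (S : Set V) : ℕ :=
  sInf {i | ∃ C, IsInBranch G l X S C ∧ i = firstIdx l X C}

/-- `β(S)`: the maximum of `b(H)` over in-branches `H` of `S`. -/
noncomputable def botEnd (G : SimpleGraph V) (l : ℕ) (X : ℕ → Set V) (S : Set V) : ℕ :=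
  sSup {i | ∃ C, IsInBranch G l X S C ∧ i = lastIdx l X C}

/-- The interval `I(S,P) = [α(S), β(S)]` of a bottleneck `S`. -/
noncomputable def botInterval (G : SimpleGraph V) (l : ℕ) (X : ℕ → Set V) (S : Set V) : Set ℕ :=
  Set.Icc (botStart G l X S) (botEnd G l X S)

/-- A pre-branch of `S`. -/
def IsPreBranch (G : SimpleGraph V) (l : ℕ) (X : ℕ → Set V) (S C : Set V) : Prop :=
  IsBranch G S C ∧ ¬ IsInBranch G l X S C ∧ firstIdx l X C < botStart G l X S

/-- A post-branch of `S`. -/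
def IsPostBranch (G : SimpleGraph V) (l : ℕ) (X : ℕ → Set V) (S C : Set V) : Prop :=
  IsBranch G S C ∧ ¬ IsInBranch G l X S C ∧
    botStart G l X S ≤ firstIdx l X C ∧ botEnd G l X S < lastIdx l X C

/-- `C` waits in the interval `[i, j]` of the decomposition. -/
def WaitsIn (X : ℕ → Set V) (C : Set V) (i j : ℕ) : Prop :=
  ∀ t, i ≤ t → t ≤ j → C ∩ X t = C ∩ X i

/-- The decomposition is `S`-structured: every component of `G - S` that is not an
`S`-branch, and every pre- or post-branch of `S`, waits in `I(S,P)`. -/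
def IsStructured (G : SimpleGraph V) (l : ℕ) (X : ℕ → Set V) (S : Set V) : Prop :=
  ∀ C : Set V,
    ((IsCompOf G S C ∧ ¬ IsBranch G S C) ∨ IsPreBranch G l X S C ∨ IsPostBranch G l X S C) →
    WaitsIn X C (botStart G l X S) (botEnd G l X S)

/-- The decomposition is `I`-connected: every connected component of the subgraph
induced by any prefix of bags contains a vertex of `I`. -/
def IsIConn (G : SimpleGraph V) (l : ℕ) (X : ℕ → Set V) (I : Set V) : Prop :=
  ∀ i < l, ∀ C : Set V, IsCompIn G {v | ∃ j ≤ i, v ∈ X j} C → (C ∩ I).Nonempty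

section Counting

universe u v

theorem mk_le_mk_of_pairwiseDisjoint_of_inter_nonempty {ι : Type u} {α : Type v} {I : Set ι}
    {f : ι → Set α} {t : Set α} (hf : I.PairwiseDisjoint f)
    (ht : ∀ i ∈ I, (f i ∩ t).Nonempty) :
    Cardinal.lift.{v} (Cardinal.mk I) ≤ Cardinal.lift.{u} (Cardinal.mk t) := by
  choose g hgf hgt using ht
  refine Cardinal.lift_mk_le_lift_mk_of_injective (f := fun i : I => ⟨g i i.2, hgt i i.2⟩) ?_
  rintro ⟨i, hi⟩ ⟨j, hj⟩ hij
  have hgij : g i hi = g j hj := congrArg Subtype.val hij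
  exact Subtype.ext (hf.elim_set hi hj _ (hgf i hi) (hgij ▸ hgf j hj))

end Counting

section Connectivity

variable {G : SimpleGraph V} {U A C D : Set V}

theorem subset_of_preconnected_induce (hC : (G.induce C).Preconnected) (hCA : (C ∩ A).Nonempty)
    (hA : ∀ x ∈ C ∩ A, ∀ y ∈ C, G.Adj x y → y ∈ A) : C ⊆ A := by
  intro v hvC
  by_contra hvA
  obtain ⟨u, huC, huA⟩ := hCA
  obtain ⟨p⟩ := hC ⟨u, huC⟩ ⟨v, hvC⟩
  obtain ⟨d, -, hfst, hsnd⟩ := p.exists_boundary_dart (Subtype.val ⁻¹' A) huA hvA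
  exact hsnd (hA d.fst ⟨d.fst.2, hfst⟩ d.snd d.snd.2 d.adj)

theorem IsCompIn.subset_of_preconnected (hD : IsCompIn G U D) (hC : (G.induce C).Preconnected)
    (hCU : C ⊆ U) (hCD : (C ∩ D).Nonempty) : C ⊆ D :=
  subset_of_preconnected_induce hC hCD fun x hx y hy hxy => hD.2.2.2 x hx.2 y (hCU hy) hxy

theorem IsCompIn.eq_of_inter_nonempty (hC : IsCompIn G U C) (hD : IsCompIn G U D)
    (hCD : (C ∩ D).Nonempty) : C = D :=
  (hD.subset_of_preconnected hC.2.2.1.preconnected hC.2.1 hCD).antisymm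
    (hC.subset_of_preconnected hD.2.2.1.preconnected hD.2.1 (Set.inter_comm C D ▸ hCD))

theorem pairwiseDisjoint_setOf_isBranch (G : SimpleGraph V) (S : Set V) :
    {C | IsBranch G S C}.PairwiseDisjoint id := fun _ hC _ hD hne =>
  by_contra fun h =>
    hne (hC.1.eq_of_inter_nonempty hD.1 (Set.not_disjoint_iff_nonempty_inter.1 h))

end Connectivity

section Supp

variable {l i : ℕ} {X : ℕ → Set V} {C : Set V} {v : V}

theorem mem_supp_singleton : i ∈ supp l X {v} ↔ i < l ∧ v ∈ X i := by
  simp only [supp, Set.mem_ofPred_eq, Set.singleton_inter_nonempty]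

theorem bddAbove_supp (l : ℕ) (X : ℕ → Set V) (C : Set V) : BddAbove (supp l X C) :=
  ⟨l, fun _ hi => hi.1.le⟩

theorem lastIdx_mem_supp (h : (supp l X C).Nonempty) : lastIdx l X C ∈ supp l X C :=
  Nat.sSup_mem h (bddAbove_supp l X C)

theorem le_lastIdx (hi : i ∈ supp l X C) : i ≤ lastIdx l X C :=
  le_csSup (bddAbove_supp l X C) hi

end Supp

namespace IsPathDecomp

variable {G : SimpleGraph V} {l : ℕ} {X : ℕ → Set V} {S C : Set V}

theorem lastIdx_singleton_mem_supp (hP : IsPathDecomp G l X) (v : V) :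
    lastIdx l X {v} ∈ supp l X {v} :=
  lastIdx_mem_supp <| (hP.1 v).imp fun _ => mem_supp_singleton.2

theorem exists_mem_supp_of_mem_nbhdSet (hP : IsPathDecomp G l X) {v : V} (hv : v ∈ nbhdSet G C) :
    ∃ i ∈ supp l X C, i ∈ supp l X {v} := by
  obtain ⟨-, u, huC, huv⟩ := hv
  obtain ⟨i, hi, hui, hvi⟩ := hP.2.1 u v huv
  exact ⟨i, ⟨hi, u, huC, hui⟩, mem_supp_singleton.2 ⟨hi, hvi⟩⟩

theorem ordConnected_supp (hP : IsPathDecomp G l X) (hC : (G.induce C).Preconnected) :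
    (supp l X C).OrdConnected := by
  refine ⟨fun i hi j hj b hb => ⟨hb.2.trans_lt hj.1, ?_⟩⟩
  by_contra hCb
  -- If `C` avoids `X b`, then lying only in bags before `b` propagates along the edges of `C`.
  let A : Set V := {x | ∀ m < l, x ∈ X m → m < b}
  have mem_A : ∀ x ∈ C, ∀ n ≤ b, x ∈ X n → x ∈ A := fun x hxC n hn hxn m hm hxm =>
    not_le.1 fun hbm => hCb ⟨x, hxC, hP.2.2 n b m hn hbm hm ⟨hxn, hxm⟩⟩
  have hCA : C ⊆ A := by
    refine subset_of_preconnected_induce hC ?_ fun x hx y hyC hxy => ?_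
    · obtain ⟨-, u, huC, hui⟩ := hi
      exact ⟨u, huC, mem_A u huC i hb.1 hui⟩
    · obtain ⟨n, hn, hxn, hyn⟩ := hP.2.1 x y hxy
      exact mem_A y hyC n (hx.2 n hn hxn).le hyn
  obtain ⟨hjl, v, hvC, hvj⟩ := hj
  exact (hCA hvC j hjl hvj).not_ge hb.2

theorem exists_subset_bag_or_forall_isBranch_mem_supp (hP : IsPathDecomp G l X)
    (hS : S.Nonempty) :
    ∃ b < l, S ⊆ X b ∨ ∀ C, IsBranch G S C → b ∈ supp l X C := by
  obtain ⟨s₀, hmin⟩ := exists_minimalFor_of_wellFoundedLT (· ∈ S) (fun s => lastIdx l X {s}) hS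
  set b := lastIdx l X {s₀}
  refine ⟨b, (hP.lastIdx_singleton_mem_supp s₀).1, or_iff_not_imp_left.2 fun hSb C hC => ?_⟩
  obtain ⟨t, htS, htb⟩ := Set.not_subset.1 hSb
  have b_lt_of_mem : ∀ j ∈ supp l X {t}, b < j := by
    intro j hj
    by_contra! hjb
    obtain ⟨hlt, htlast⟩ := mem_supp_singleton.1 (hP.lastIdx_singleton_mem_supp t)
    have hbt : b ≤ lastIdx l X {t} := hmin.le htS
    exact htb (hP.2.2 j b _ hjb hbt hlt ⟨(mem_supp_singleton.1 hj).2, htlast⟩)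
  have exists_common_bag : ∀ s ∈ S, ∃ i ∈ supp l X C, i ∈ supp l X {s} := fun s hs =>
    hP.exists_mem_supp_of_mem_nbhdSet (hC.2.symm ▸ hs)
  obtain ⟨i, hiC, his₀⟩ := exists_common_bag s₀ hmin.prop
  obtain ⟨j, hjC, hjt⟩ := exists_common_bag t htS
  exact (hP.ordConnected_supp hC.1.2.2.1.preconnected).out hiC hjC
    ⟨le_lastIdx his₀, (b_lt_of_mem j hjt).le⟩

end IsPathDecomp

theorem stmt3_general {G : SimpleGraph V} {l : ℕ} {X : ℕ → Set V} (hP : IsPathDecomp G l X)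
    {S : Set V} (hS : S.Nonempty)
    (hcard : ∀ i < l, Cardinal.mk (X i) < Cardinal.mk {C | IsBranch G S C}) :
    ∃ i < l, S ⊆ X i := by
  obtain ⟨b, hb, hSb | hmeet⟩ := hP.exists_subset_bag_or_forall_isBranch_mem_supp hS
  · exact ⟨b, hb, hSb⟩
  · have hle := mk_le_mk_of_pairwiseDisjoint_of_inter_nonempty (pairwiseDisjoint_setOf_isBranch G S)
      fun C hC => (hmeet C hC).2
    exact absurd (hcard b hb) (Cardinal.lift_le.1 hle).not_gt

/-- for a path decomposition with bags of size at most `k` and a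
bottleneck `S`, some bag contains all of `S`. -/
theorem stmt3 [Fintype V] (k : ℕ) (hk : 1 ≤ k) (G : SimpleGraph V) (l : ℕ)
    (X : ℕ → Set V) (hP : IsPathDecomp G l X) (hw : ∀ i < l, (X i).ncard ≤ k)
    (S : Set V) (hS : IsBottleneck G k S) :
    ∃ i < l, S ⊆ X i :=
  stmt3_general hP hS.1 fun i hi => by
    rw [← Set.cast_ncard (Set.toFinite _), ← Set.cast_ncard (Set.toFinite _)]
    exact_mod_cast (hw i hi).trans_lt (by have := hS.2; omega)
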